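/- Let ψ : Ω × □^n → ℝ be an admissible function for which there exists a positive function α ∈ L^1(Ω) with |ψ(x,y)| ≤ α(x) for all (x,y) ∈ Ω × □^n. Then ∫_Ω ψ(x, v_h(x)) dx → ∫_{Ω×□^n} ψ(x, y) dx dy as h → ∞. -/

import Mathlib

open MeasureTheory Filter Topology

/-- The unit cell `□ = [0,1)^d` in `ℝ^d`. -/
def unitCell (d : ℕ) : Set (Fin d → ℝ) := Set.univ.pi fun _ => Set.Ico (0 : ℝ) 1

/-- The `n`-fold product `□^n` of unit cells. -/
def unitCellPow (d n : ℕ) : Set (Fin n → Fin d → ℝ) := Set.univ.pi fun _ => unitCell d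

/-- The oscillating sequence `v_h(x) = (⟨x/ρ_1(ε_h)⟩, …, ⟨x/ρ_n(ε_h)⟩)`. -/
noncomputable def vFn {d n : ℕ} (ρ : Fin n → ℝ → ℝ) (ε : ℕ → ℝ) (h : ℕ)
    (x : Fin d → ℝ) : Fin n → Fin d → ℝ :=
  fun k i => Int.fract (x i / ρ k (ε h))

/-- A function `ψ : Ω × □^n → ℝ` is *admissible* if for every `δ > 0` there are
compact sets `X ⊆ Ω` and `Y ⊆ □` whose complements have measure at most `δ`
such that the restriction of `ψ` to `X × Y^n` is continuous. -/
def AdmissibleFun {d n : ℕ} (Ω : Set (Fin d → ℝ))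
    (ψ : (Fin d → ℝ) → (Fin n → Fin d → ℝ) → ℝ) : Prop :=
  ∀ δ > (0 : ℝ), ∃ X : Set (Fin d → ℝ),
    IsCompact X ∧ X ⊆ Ω ∧ volume (Ω \ X) ≤ ENNReal.ofReal δ ∧
    ∃ Y : Set (Fin d → ℝ),
      IsCompact Y ∧ Y ⊆ unitCell d ∧ volume (unitCell d \ Y) ≤ ENNReal.ofReal δ ∧
      ContinuousOn (fun p : (Fin d → ℝ) × (Fin n → Fin d → ℝ) => ψ p.1 p.2)
        (X ×ˢ Set.univ.pi fun _ => Y)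

section Helpers

open UnitAddTorus

lemma aux_integrable_comp {A ι : Type*} [Fintype ι] [TopologicalSpace A] [SecondCountableTopology A]
    [MeasurableSpace A] [OpensMeasurableSpace A] (P : A → UnitAddTorus ι) (hP : Continuous P)
    (ν : Measure A) [IsFiniteMeasure ν] (G : C(UnitAddTorus ι, ℂ)) :
    Integrable (fun p => G (P p)) ν := by
  refine Integrable.of_bound (C := ‖G‖) ?_ (Eventually.of_forall fun p => G.norm_coe_le_norm _)
  exact (G.continuous.comp hP).aestronglyMeasurable

lemma aux_weak {A ι : Type*} [Fintype ι] [TopologicalSpace A] [SecondCountableTopology A]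
    [MeasurableSpace A] [OpensMeasurableSpace A] (P : A → UnitAddTorus ι) (hP : Continuous P)
    (ν : ℕ → Measure A) (μ : Measure A) [∀ h, IsFiniteMeasure (ν h)] [IsFiniteMeasure μ]
    (C : ℝ) (hν : ∀ h, (ν h).real Set.univ ≤ C) (hμ : μ.real Set.univ ≤ C)
    (hF : ∀ q : ι → ℤ, Tendsto (fun h => ∫ p, mFourier q (P p) ∂(ν h)) atTop
      (𝓝 (∫ p, mFourier q (P p) ∂μ))) (G : C(UnitAddTorus ι, ℂ)) :
    Tendsto (fun h => ∫ p, G (P p) ∂(ν h)) atTop (𝓝 (∫ p, G (P p) ∂μ)) := by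
  have hC : 0 ≤ C := le_trans measureReal_nonneg hμ
  have hspan : ∀ G ∈ Submodule.span ℂ (Set.range (mFourier (d := ι))),
      Tendsto (fun h => ∫ p, G (P p) ∂(ν h)) atTop (𝓝 (∫ p, G (P p) ∂μ)) := by
    intro G hG
    induction hG using Submodule.span_induction with
    | mem x hx => obtain ⟨q, rfl⟩ := hx; exact hF q
    | zero => simp
    | add x y _ _ hx hy =>
      simp only [ContinuousMap.add_apply]
      rw [integral_add (aux_integrable_comp P hP μ x) (aux_integrable_comp P hP μ y)]
      refine (hx.add hy).congr fun h => ?_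
      rw [integral_add (aux_integrable_comp P hP _ x) (aux_integrable_comp P hP _ y)]
    | smul a x _ hx =>
      simp only [ContinuousMap.smul_apply]
      rw [integral_smul]
      refine (hx.const_smul a).congr fun h => ?_
      rw [integral_smul]
  have hdiff : ∀ (κ : Measure A) [IsFiniteMeasure κ], κ.real Set.univ ≤ C →
      ∀ G H : C(UnitAddTorus ι, ℂ), ‖(∫ p, G (P p) ∂κ) - ∫ p, H (P p) ∂κ‖ ≤ ‖G - H‖ * C := by
    intro κ _ hκ G H
    rw [← integral_sub (aux_integrable_comp P hP κ G) (aux_integrable_comp P hP κ H)]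
    refine (norm_integral_le_of_norm_le_const (C := ‖G - H‖)
      (Eventually.of_forall fun p => (G - H).norm_coe_le_norm _)).trans ?_
    gcongr
  have hmem : G ∈ closure (Submodule.span ℂ (Set.range (mFourier (d := ι))) : Set _) := by
    have := span_mFourier_closure_eq_top (d := ι)
    rw [← Submodule.topologicalClosure_coe, this]; trivial
  rw [Metric.tendsto_atTop]
  intro e he
  obtain ⟨H, hH, hGH⟩ := Metric.mem_closure_iff.1 hmem (e / (3 * (C + 1))) (by positivity)
  obtain ⟨N, hN⟩ := Metric.tendsto_atTop.1 (hspan H hH) (e / 3) (by positivity)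
  refine ⟨N, fun h hh => ?_⟩
  have h1 := hdiff (ν h) (hν h) G H
  have h2 := hdiff μ hμ G H
  have h3 := hN h hh
  rw [dist_eq_norm] at h3 hGH ⊢
  have h4 : ‖G - H‖ * C ≤ e / 3 := by
    calc ‖G - H‖ * C ≤ e / (3 * (C + 1)) * (C + 1) := by gcongr; linarith
      _ = e / 3 := by field_simp
  set a := ∫ p, G (P p) ∂(ν h)
  set b := ∫ p, H (P p) ∂(ν h)
  set c := ∫ p, G (P p) ∂μ
  set d := ∫ p, H (P p) ∂μ
  have h5 : a - c = (a - b) + (b - d) - (c - d) := by ring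
  rw [h5]
  have := norm_sub_le ((a - b) + (b - d)) (c - d)
  have := norm_add_le (a - b) (b - d)
  linarith

lemma aux_sep {n : ℕ} (r : Fin n → ℕ → ℝ) (hpos : ∀ k h, 0 < r k h)
    (hsep : ∀ (k : ℕ) (hk : k + 1 < n),
      Tendsto (fun h => r ⟨k + 1, hk⟩ h / r ⟨k, Nat.lt_of_succ_lt hk⟩ h) atTop (𝓝 0))
    (j : Fin n) (m : ℕ) : ∀ (hl : j.1 + m + 1 < n),
      Tendsto (fun h => r ⟨j.1 + m + 1, hl⟩ h / r j h) atTop (𝓝 0) := by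
  induction m with
  | zero => intro hl; exact hsep j.1 hl
  | succ m ih =>
    intro hl
    have h1 := (hsep (j.1 + m + 1) hl).mul (ih (by omega))
    rw [mul_zero] at h1
    refine h1.congr fun h => ?_
    have := (hpos ⟨j.1 + m + 1, by omega⟩ h).ne'
    have := (hpos j h).ne'
    field_simp
    rfl

lemma aux_freq {n : ℕ} (r : Fin n → ℕ → ℝ) (hpos : ∀ k h, 0 < r k h)
    (h0 : ∀ k, Tendsto (r k) atTop (𝓝 0))
    (hsep : ∀ (k : ℕ) (hk : k + 1 < n),
      Tendsto (fun h => r ⟨k + 1, hk⟩ h / r ⟨k, Nat.lt_of_succ_lt hk⟩ h) atTop (𝓝 0))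
    (c : Fin n → ℝ) (hc : ∃ k, c k ≠ 0) :
    Tendsto (fun h => |∑ k, c k / r k h|) atTop atTop := by
  classical
  obtain ⟨J, hJ, hmax⟩ : ∃ J, c J ≠ 0 ∧ ∀ k, J < k → c k = 0 := by
    let S := Finset.univ.filter fun k => c k ≠ 0
    have hS : S.Nonempty := by obtain ⟨k, hk⟩ := hc; exact ⟨k, by simp [S, hk]⟩
    refine ⟨S.max' hS, by simpa [S] using S.max'_mem hS, fun k hk => ?_⟩
    by_contra hne
    exact absurd (S.le_max' k (by simp [S, hne])) (not_le.2 hk)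
  have h1 : Tendsto (fun h => ∑ k, c k * (r J h / r k h)) atTop (𝓝 (∑ k, if k = J then c J else 0)) := by
    refine tendsto_finsetSum _ fun k _ => ?_
    rcases lt_trichotomy k J with hk | hk | hk
    · rw [if_neg hk.ne]
      obtain ⟨m, hm⟩ := Nat.exists_eq_add_of_lt (Fin.lt_def.1 hk)
      have := aux_sep r hpos hsep k m (by omega)
      have hJ' : J = ⟨k.1 + m + 1, by omega⟩ := Fin.ext hm
      rw [← hJ'] at this
      simpa using this.const_mul (c k)
    · subst hk
      simp only [if_true]
      refine tendsto_const_nhds.congr fun h => ?_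
      rw [div_self (hpos k h).ne', mul_one]
    · rw [if_neg hk.ne', hmax k hk]; simp
  simp only [Finset.sum_ite_eq', Finset.mem_univ, if_true] at h1
  have h2 : Tendsto (fun h => (r J h)⁻¹) atTop atTop :=
    tendsto_inv_nhdsGT_zero.comp (tendsto_nhdsWithin_iff.2
      ⟨h0 J, Eventually.of_forall fun h => hpos J h⟩)
  refine (h2.atTop_mul_pos (abs_pos.2 hJ) h1.abs).congr fun h => ?_
  rw [← abs_of_pos (inv_pos.2 (hpos J h)), ← abs_mul, Finset.mul_sum]
  congr 1
  refine Finset.sum_congr rfl fun k _ => ?_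
  have := (hpos J h).ne'
  have := (hpos k h).ne'
  field_simp

/-- The embedding into the torus. -/
noncomputable def auxP {d n : ℕ} (R : ℝ) (p : (Fin d → ℝ) × (Fin n → Fin d → ℝ)) :
    UnitAddTorus (Option (Fin n) × Fin d)
  | (none, i) => ((p.1 i / R : ℝ) : UnitAddCircle)
  | (some k, i) => ((p.2 k i : ℝ) : UnitAddCircle)

lemma auxP_continuous {d n : ℕ} (R : ℝ) : Continuous (auxP (d := d) (n := n) R) := by
  refine continuous_pi fun ⟨o, i⟩ => ?_
  cases o with
  | none => exact (AddCircle.continuous_mk' 1).comp (by fun_prop)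
  | some k => exact (AddCircle.continuous_mk' 1).comp (by fun_prop)

lemma auxP_inj {d n : ℕ} (R : ℝ) (hR : 0 < R) (S : Set ((Fin d → ℝ) × (Fin n → Fin d → ℝ)))
    (hS1 : ∀ p ∈ S, ∀ i, |p.1 i| < R / 2) (hS2 : ∀ p ∈ S, p.2 ∈ unitCellPow d n) :
    Set.InjOn (auxP R) S := by
  intro p hp q hq hpq
  have : Fact ((0 : ℝ) < 1) := ⟨one_pos⟩
  ext i
  · have h := congrFun hpq (none, i)
    have key : ∀ p ∈ S, p.1 i / R ∈ Set.Ico (-(1/2) : ℝ) (-(1/2) + 1) := by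
      intro p hp
      have := abs_lt.1 (hS1 p hp i)
      constructor
      · rw [le_div_iff₀ hR]; linarith
      · rw [div_lt_iff₀ hR]; linarith
    have := (AddCircle.coe_eq_coe_iff_of_mem_Ico (key p hp) (key q hq)).1 h
    field_simp at this
    exact this
  · rename_i k
    have h := congrFun hpq (some i, k)
    have key : ∀ p ∈ S, p.2 i k ∈ Set.Ico (0 : ℝ) (0 + 1) := by
      intro p hp
      have := hS2 p hp i trivial k trivial
      simpa using this
    exact (AddCircle.coe_eq_coe_iff_of_mem_Ico (key p hp) (key q hq)).1 h

lemma auxP_vFn {d n : ℕ} (R : ℝ) (ρ : Fin n → ℝ → ℝ) (ε : ℕ → ℝ) (h : ℕ) (x : Fin d → ℝ) :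
    auxP R (x, vFn ρ ε h x) = auxP R (x, fun k i => x i / ρ k (ε h)) := by
  ext ⟨o, i⟩
  cases o with
  | none => rfl
  | some k => exact AddCircle.coe_fract _

lemma aux_mFourier {d n : ℕ} (R : ℝ) (q : Option (Fin n) × Fin d → ℤ)
    (x : Fin d → ℝ) (y : Fin n → Fin d → ℝ) :
    mFourier q (auxP R (x, y)) =
      (∏ i, fourier (q (none, i)) ((x i / R : ℝ) : UnitAddCircle)) *
        ∏ k, ∏ i, fourier (q (some k, i)) ((y k i : ℝ) : UnitAddCircle) := by
  change ∏ i, _ = _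
  rw [Fintype.prod_prod_type, Fintype.prod_option]
  rfl


lemma unitCell_measurable (d : ℕ) : MeasurableSet (unitCell d) :=
  MeasurableSet.univ_pi fun _ => measurableSet_Ico

lemma unitCellPow_measurable (d n : ℕ) : MeasurableSet (unitCellPow d n) :=
  MeasurableSet.univ_pi fun _ => unitCell_measurable d

lemma unitCell_volume (d : ℕ) : volume (unitCell d) = 1 := by
  unfold unitCell
  rw [volume_pi_pi]; simp

lemma unitCellPow_volume (d n : ℕ) : volume (unitCellPow d n) = 1 := by
  unfold unitCellPow
  rw [volume_pi_pi]; simp [unitCell_volume]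

lemma vFn_measurable {d n : ℕ} (ρ : Fin n → ℝ → ℝ) (ε : ℕ → ℝ) (h : ℕ) :
    Measurable (vFn (d := d) ρ ε h) := by
  refine measurable_pi_lambda _ fun k => measurable_pi_lambda _ fun i => ?_
  exact measurable_fract.comp ((measurable_pi_apply i).div_const _)

lemma vFn_mem {d n : ℕ} (ρ : Fin n → ℝ → ℝ) (ε : ℕ → ℝ) (h : ℕ) (x : Fin d → ℝ) :
    vFn ρ ε h x ∈ unitCellPow d n :=
  fun _ _ _ _ => ⟨Int.fract_nonneg _, Int.fract_lt_one _⟩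

lemma aux_cell {d : ℕ} (Ω : Set (Fin d → ℝ)) (R B r : ℝ) (hr : 0 < r) (hrB : r ≤ B)
    (hR : ∀ x ∈ Ω, ∀ i, |x i| < R / 2) (hR0 : 0 < R) (A : Set (Fin d → ℝ)) :
    volume ({x | (fun i => Int.fract (x i / r)) ∈ A} ∩ Ω) ≤
      ENNReal.ofReal ((R + 2 * B) ^ d) * volume A := by
  set N : ℕ := ⌈R / (2 * r)⌉₊ with hN
  let M : Finset (Fin d → ℤ) := Fintype.piFinset fun _ => Finset.Ico (-(N : ℤ)) N
  have hsub : ({x | (fun i => Int.fract (x i / r)) ∈ A} ∩ Ω) ⊆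
      ⋃ m ∈ M, (fun x : Fin d → ℝ => r⁻¹ • x) ⁻¹'
        ((fun x => x + (fun i => -(m i : ℝ))) ⁻¹' A) := by
    rintro x ⟨hxA, hxΩ⟩
    simp only [Set.mem_iUnion]
    refine ⟨fun i => ⌊x i / r⌋, ?_, ?_⟩
    · simp only [M, Fintype.mem_piFinset, Finset.mem_Ico]
      intro i
      have h1 := abs_lt.1 (hR x hxΩ i)
      have h2 : R / (2 * r) ≤ N := Nat.le_ceil _
      have h2' : R ≤ N * (2 * r) := (div_le_iff₀ (by positivity)).1 h2
      constructor
      · rw [Int.le_floor, le_div_iff₀ hr]; push_cast; nlinarith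
      · rw [Int.floor_lt, div_lt_iff₀ hr]; push_cast; nlinarith
    · simp only [Set.mem_preimage]
      change (fun i => Int.fract (x i / r)) ∈ A at hxA
      have : (r⁻¹ • x + fun i => -((⌊x i / r⌋ : ℤ) : ℝ)) = fun i => Int.fract (x i / r) := by
        ext i
        simp [Int.fract, div_eq_inv_mul, sub_eq_add_neg]
      rw [this]; exact hxA
  refine (measure_mono hsub).trans ((measure_biUnion_finset_le _ _).trans ?_)
  have hone : ∀ m : Fin d → ℤ, volume ((fun x : Fin d → ℝ => r⁻¹ • x) ⁻¹'
        ((fun x => x + (fun i => -(m i : ℝ))) ⁻¹' A)) = ENNReal.ofReal (r ^ d) * volume A := by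
    intro m
    rw [Measure.addHaar_preimage_smul _ (inv_ne_zero hr.ne'), measure_preimage_add_right]
    congr 2
    simp [abs_of_pos hr]
  simp only [hone]
  rw [Finset.sum_const, nsmul_eq_mul, ← mul_assoc]
  gcongr
  have hcard : M.card = (2 * N) ^ d := by
    simp only [M, Fintype.card_piFinset, Int.card_Ico, Finset.prod_const, Finset.card_univ,
      Fintype.card_fin]
    congr 1; omega
  rw [hcard, ← ENNReal.ofReal_natCast, ← ENNReal.ofReal_mul (by positivity)]
  apply ENNReal.ofReal_le_ofReal
  push_cast
  rw [← mul_pow]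
  gcongr
  have h3 : (N : ℝ) < R / (2 * r) + 1 := Nat.ceil_lt_add_one (by positivity)
  calc 2 * (N : ℝ) * r ≤ 2 * (R / (2 * r) + 1) * r := by gcongr
    _ = R + 2 * r := by field_simp
    _ ≤ _ := by linarith

lemma aux_int_cell {d n : ℕ} (q : Fin n → Fin d → ℤ) (hq : ∃ k i, q k i ≠ 0) :
    ∫ y in unitCellPow d n, ∏ k, ∏ i, fourier (q k i) ((y k i : ℝ) : UnitAddCircle) = 0 := by
  obtain ⟨k, i, hk⟩ := hq
  have h1 : (volume : Measure (Fin n → Fin d → ℝ)).restrict (unitCellPow d n) =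
      Measure.pi fun _ => (volume : Measure (Fin d → ℝ)).restrict (unitCell d) :=
    Measure.restrict_pi_pi _ _
  have h2 : (volume : Measure (Fin d → ℝ)).restrict (unitCell d) =
      Measure.pi fun _ => (volume : Measure ℝ).restrict (Set.Ico 0 1) :=
    Measure.restrict_pi_pi _ _
  rw [h1, integral_fintype_prod_eq_prod
    (f := fun k (y : Fin d → ℝ) => ∏ i, fourier (q k i) ((y i : ℝ) : UnitAddCircle))]
  refine Finset.prod_eq_zero (Finset.mem_univ k) ?_
  rw [h2, integral_fintype_prod_eq_prod
    (f := fun i (y : ℝ) => fourier (q k i) ((y : ℝ) : UnitAddCircle))]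
  refine Finset.prod_eq_zero (Finset.mem_univ i) ?_
  rw [integral_Ico_eq_integral_Ioc, ← intervalIntegral.integral_of_le zero_le_one]
  have hne : (2 * Real.pi * Complex.I * (q k i : ℂ)) ≠ 0 := by
    have : (q k i : ℂ) ≠ 0 := by exact_mod_cast hk
    have := Complex.I_ne_zero
    have : (Real.pi : ℂ) ≠ 0 := by exact_mod_cast Real.pi_ne_zero
    simp_all
  simp only [fourier_coe_apply, Complex.ofReal_one, div_one]
  rw [integral_exp_mul_complex hne]
  have : Complex.exp (2 * Real.pi * Complex.I * (q k i : ℂ)) = 1 := by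
    rw [Complex.exp_eq_one_iff]; exact ⟨q k i, by ring⟩
  simp [this]

lemma aux_fourier_conv {d n : ℕ} (Ω : Set (Fin d → ℝ)) (hΩm : MeasurableSet Ω)
    (hΩ : volume Ω ≠ ⊤) (ρ : Fin n → ℝ → ℝ) (ε : ℕ → ℝ)
    (hpos : ∀ k h, 0 < ρ k (ε h))
    (h0 : ∀ k, Tendsto (fun h => ρ k (ε h)) atTop (𝓝 0))
    (hsep : ∀ (k : ℕ) (hk : k + 1 < n),
      Tendsto (fun h => ρ ⟨k + 1, hk⟩ (ε h) / ρ ⟨k, Nat.lt_of_succ_lt hk⟩ (ε h)) atTop (𝓝 0))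
    (R : ℝ) (q : Option (Fin n) × Fin d → ℤ) :
    Tendsto (fun h => ∫ p, mFourier q (auxP R p)
        ∂((volume.restrict Ω).map fun x => (x, vFn ρ ε h x))) atTop
      (𝓝 (∫ p, mFourier q (auxP R p)
        ∂((volume.restrict Ω).prod (volume.restrict (unitCellPow d n))))) := by
  have hfin : IsFiniteMeasure (volume.restrict Ω) := ⟨by simpa using hΩ.lt_top⟩
  have hfin2 : IsFiniteMeasure ((volume : Measure (Fin n → Fin d → ℝ)).restrict (unitCellPow d n)) :=
    ⟨by simp [unitCellPow_volume]⟩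
  set f : (Fin d → ℝ) → ℂ := fun x => ∏ i, fourier (q (none, i)) ((x i / R : ℝ) : UnitAddCircle)
    with hf
  have hmap : ∀ h, ∫ p, mFourier q (auxP R p)
        ∂((volume.restrict Ω).map fun x => (x, vFn ρ ε h x)) =
      ∫ x in Ω, f x * ∏ k, ∏ i, fourier (q (some k, i)) ((x i / ρ k (ε h) : ℝ) : UnitAddCircle) := by
    intro h
    have hm : Measurable fun x : Fin d → ℝ => (x, vFn ρ ε h x) :=
      measurable_id.prodMk (vFn_measurable ρ ε h)
    rw [integral_map (f := fun p => mFourier q (auxP R p)) hm.aemeasurable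
      ((mFourier q).continuous.comp (auxP_continuous R)).aestronglyMeasurable]
    simp only [auxP_vFn, aux_mFourier, hf]
  have hprod : ∫ p, mFourier q (auxP R p)
        ∂((volume.restrict Ω).prod (volume.restrict (unitCellPow d n))) =
      (∫ x in Ω, f x) * ∫ y in unitCellPow d n,
        ∏ k, ∏ i, fourier (q (some k, i)) ((y k i : ℝ) : UnitAddCircle) := by
    rw [← integral_prod_mul]
    refine integral_congr_ae (Eventually.of_forall fun p => ?_)
    exact aux_mFourier R q p.1 p.2
  rw [hprod]
  simp only [hmap]
  by_cases hq : ∃ k i, q (some k, i) ≠ 0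
  · rw [aux_int_cell (fun k i => q (some k, i)) hq, mul_zero]
    obtain ⟨k₀, i₀, hk₀⟩ := hq
    let w : ℕ → StrongDual ℝ (Fin d → ℝ) := fun h =>
      ∑ k, ∑ i, (-((q (some k, i) : ℝ) / ρ k (ε h))) • ContinuousLinearMap.proj (R := ℝ) i
    have hw : Tendsto w atTop (cocompact _) := by
      rw [← Metric.cobounded_eq_cocompact, ← tendsto_norm_atTop_iff_cobounded]
      have h1 := aux_freq (fun k h => ρ k (ε h)) hpos h0 hsep (fun k => (q (some k, i₀) : ℝ))
        ⟨k₀, by exact_mod_cast hk₀⟩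
      refine tendsto_atTop_mono (fun h => ?_) h1
      have h2 := (w h).le_opNorm (Pi.single i₀ 1)
      have h3 : w h (Pi.single i₀ 1) = - ∑ k, (q (some k, i₀) : ℝ) / ρ k (ε h) := by
        simp [w, _root_.sum_apply, Pi.single_apply, Finset.sum_neg_distrib]
      rw [h3, norm_neg, Real.norm_eq_abs, Pi.norm_single] at h2
      simpa using h2
    have h4 := (tendsto_integral_exp_smul_cocompact (Ω.indicator f) volume).comp hw
    refine h4.congr fun h => ?_
    simp only [Function.comp]
    rw [← integral_indicator hΩm]
    congr 1
    ext x
    by_cases hx : x ∈ Ω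
    · rw [Set.indicator_of_mem hx, Set.indicator_of_mem hx, Circle.smul_def, smul_eq_mul, mul_comm]
      congr 1
      rw [Real.fourierChar_apply]
      simp only [fourier_coe_apply, ← Complex.exp_sum]
      congr 1
      simp only [w, _root_.sum_apply, _root_.smul_apply,
        ContinuousLinearMap.proj_apply, smul_eq_mul]
      push_cast
      simp only [← Finset.sum_neg_distrib, Finset.mul_sum, Finset.sum_mul]
      refine Finset.sum_congr rfl fun k _ => Finset.sum_congr rfl fun i _ => ?_
      ring
    · rw [Set.indicator_of_notMem hx, Set.indicator_of_notMem hx, smul_zero]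
  · push Not at hq
    simp [hq, unitCellPow_volume, measureReal_def]

/-- Measures on `E × F` with first marginal Lebesgue on `Ω`, second components absolutely
continuous with bounded densities. -/
structure AuxGood {d n : ℕ} (Ω : Set (Fin d → ℝ)) (C : ℝ)
    (ν : Measure ((Fin d → ℝ) × (Fin n → Fin d → ℝ))) : Prop where
  fst : ν.map Prod.fst = volume.restrict Ω
  snd : ∀ᵐ p ∂ν, p.2 ∈ unitCellPow d n
  cell : ∀ k, ∀ A, MeasurableSet A → ν {p | p.2 k ∈ A} ≤ ENNReal.ofReal C * volume A

variable {d n : ℕ} {Ω : Set (Fin d → ℝ)} {C : ℝ}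
  {ν : Measure ((Fin d → ℝ) × (Fin n → Fin d → ℝ))}

lemma AuxGood.fst_ae (hν : AuxGood Ω C ν) (hΩm : MeasurableSet Ω) : ∀ᵐ p ∂ν, p.1 ∈ Ω := by
  have h1 : ∀ᵐ x ∂(ν.map Prod.fst), x ∈ Ω := by
    rw [hν.fst]; exact ae_restrict_mem hΩm
  exact ae_of_ae_map measurable_fst.aemeasurable h1

lemma AuxGood.compl (hν : AuxGood Ω C ν) (hΩm : MeasurableSet Ω) (hC : 0 ≤ C)
    (X Y : Set (Fin d → ℝ))
    (hX : IsCompact X) (hY : IsCompact Y) (δ : ℝ) (hδ : 0 ≤ δ)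
    (hXδ : volume (Ω \ X) ≤ ENNReal.ofReal δ) (hYδ : volume (unitCell d \ Y) ≤ ENNReal.ofReal δ) :
    ν (X ×ˢ Set.univ.pi fun _ => Y)ᶜ ≤ ENNReal.ofReal ((1 + n * C) * δ) := by
  have hsub : ν (X ×ˢ Set.univ.pi fun _ => Y)ᶜ ≤
      ν (Prod.fst ⁻¹' (Ω \ X) ∪ ⋃ k ∈ (Finset.univ : Finset (Fin n)),
        {p | p.2 k ∈ unitCell d \ Y}) := by
    refine measure_mono_ae ?_
    filter_upwards [hν.fst_ae hΩm, hν.snd] with p h1 h2 hp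
    by_cases hpX : p.1 ∈ X
    · right
      have : ¬ p.2 ∈ Set.univ.pi fun _ => Y := fun h => hp ⟨hpX, h⟩
      simp only [Set.mem_pi, not_forall] at this
      obtain ⟨k, _, hk⟩ := this
      simp only [Set.mem_iUnion]
      exact ⟨k, Finset.mem_univ k, h2 k trivial, hk⟩
    · left; exact ⟨h1, hpX⟩
  refine hsub.trans ((measure_union_le _ _).trans ?_)
  have h1 : ν (Prod.fst ⁻¹' (Ω \ X)) ≤ ENNReal.ofReal δ := by
    have hm : MeasurableSet (Ω \ X) := hΩm.diff hX.measurableSet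
    rw [← Measure.map_apply measurable_fst hm, hν.fst]
    exact (Measure.restrict_apply_le _ _).trans hXδ
  have h2 : ν (⋃ k ∈ (Finset.univ : Finset (Fin n)), {p | p.2 k ∈ unitCell d \ Y}) ≤
      ENNReal.ofReal (n * C * δ) := by
    refine (measure_biUnion_finset_le _ _).trans ?_
    calc ∑ k : Fin n, ν {p | p.2 k ∈ unitCell d \ Y}
        ≤ ∑ k : Fin n, ENNReal.ofReal C * ENNReal.ofReal δ := by
          refine Finset.sum_le_sum fun k _ => ?_
          refine (hν.cell k _ ((unitCell_measurable d).diff hY.measurableSet)).trans ?_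
          gcongr
      _ = ENNReal.ofReal (n * C * δ) := by
          rw [Finset.sum_const, nsmul_eq_mul, ← ENNReal.ofReal_mul hC, Finset.card_univ,
            Fintype.card_fin, ← ENNReal.ofReal_natCast, ← ENNReal.ofReal_mul (by positivity),
            mul_assoc]
  refine (add_le_add h1 h2).trans ?_
  rw [← ENNReal.ofReal_add hδ (by positivity)]
  apply ENNReal.ofReal_le_ofReal
  linarith

lemma AuxGood.aesm (hν : AuxGood Ω C ν) (hΩm : MeasurableSet Ω) (hC : 0 ≤ C)
    (ψ : (Fin d → ℝ) → (Fin n → Fin d → ℝ) → ℝ) (hψ : AdmissibleFun Ω ψ) :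
    AEStronglyMeasurable (fun p => ψ p.1 p.2) ν := by
  choose X hXc hXΩ hXδ Y hYc hYs hYδ hcont using
    fun j : ℕ => hψ (1 / ((j : ℝ) + 1)) (by positivity)
  let S : ℕ → Set ((Fin d → ℝ) × (Fin n → Fin d → ℝ)) :=
    fun j => X j ×ˢ Set.univ.pi fun _ => Y j
  have hSm : ∀ j, MeasurableSet (S j) := fun j =>
    (hXc j).measurableSet.prod (MeasurableSet.univ_pi fun _ => (hYc j).measurableSet)
  have h1 : AEStronglyMeasurable (fun p => ψ p.1 p.2) (ν.restrict (⋃ j, S j)) :=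
    aestronglyMeasurable_iUnion_iff.2 fun j => (hcont j).aestronglyMeasurable (hSm j)
  have h2 : ν (⋃ j, S j)ᶜ = 0 := by
    have hb : ∀ j : ℕ, ν (⋃ j, S j)ᶜ ≤
        ENNReal.ofReal ((1 + n * C) * (1 / ((j : ℝ) + 1))) := fun j =>
      (measure_mono (Set.compl_subset_compl.2 (Set.subset_iUnion S j))).trans
        (hν.compl hΩm hC _ _ (hXc j) (hYc j) _ (by positivity) (hXδ j) (hYδ j))
    have hl : Tendsto (fun j : ℕ => ENNReal.ofReal ((1 + n * C) * (1 / ((j : ℝ) + 1)))) atTop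
        (𝓝 0) := by
      have := ENNReal.tendsto_ofReal
        ((tendsto_one_div_add_atTop_nhds_zero_nat (𝕜 := ℝ)).const_mul (1 + n * C))
      simpa using this
    exact le_antisymm (ge_of_tendsto' hl hb) bot_le
  rwa [Measure.restrict_eq_self_of_ae_mem (s := ⋃ j, S j) (mem_ae_iff.2 h2)] at h1

lemma AuxGood.integrable (hν : AuxGood Ω C ν) (hΩm : MeasurableSet Ω) (hC : 0 ≤ C)
    (ψ : (Fin d → ℝ) → (Fin n → Fin d → ℝ) → ℝ) (hψ : AdmissibleFun Ω ψ)
    (α : (Fin d → ℝ) → ℝ) (hαint : IntegrableOn α Ω)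
    (hdom : ∀ x ∈ Ω, ∀ y ∈ unitCellPow d n, |ψ x y| ≤ α x) :
    Integrable (fun p => ψ p.1 p.2) ν := by
  have h1 : Integrable α (ν.map Prod.fst) := by rw [hν.fst]; exact hαint
  refine (h1.comp_measurable measurable_fst).mono' (hν.aesm hΩm hC ψ hψ) ?_
  filter_upwards [hν.fst_ae hΩm, hν.snd] with p hp1 hp2
  exact hdom _ hp1 _ hp2

/-- Approximation of the admissible function by a continuous function on the torus, uniformly
over good measures. -/
lemma aux_approx (hΩm : MeasurableSet Ω) (hC : 0 ≤ C)
    (R : ℝ) (hR0 : 0 < R) (hR : ∀ x ∈ Ω, ∀ i, |x i| < R / 2)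
    (ψ : (Fin d → ℝ) → (Fin n → Fin d → ℝ) → ℝ) (hψ : AdmissibleFun Ω ψ)
    (α : (Fin d → ℝ) → ℝ) (hαint : IntegrableOn α Ω)
    (hdom : ∀ x ∈ Ω, ∀ y ∈ unitCellPow d n, |ψ x y| ≤ α x) (η : ℝ) (hη : 0 < η) :
    ∃ G : C(UnitAddTorus (Option (Fin n) × Fin d), ℝ),
      ∀ ν : Measure ((Fin d → ℝ) × (Fin n → Fin d → ℝ)), IsFiniteMeasure ν → AuxGood Ω C ν →
        |(∫ p, ψ p.1 p.2 ∂ν) - ∫ p, G (auxP R p) ∂ν| ≤ η := by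
  -- truncation level
  obtain ⟨M, hM⟩ : ∃ M : ℕ, ∫ x in Ω, max (α x - M) 0 < η / 2 := by
    have h1 : Tendsto (fun M : ℕ => ∫ x in Ω, max (α x - M) 0) atTop
        (𝓝 (∫ x in Ω, (0 : ℝ))) := by
      refine tendsto_integral_of_dominated_convergence (fun x => |α x|) ?_ hαint.abs ?_ ?_
      · intro M
        exact (hαint.aestronglyMeasurable.sub aestronglyMeasurable_const).sup
          aestronglyMeasurable_const
      · intro M
        refine Eventually.of_forall fun x => ?_
        have h0 : (0 : ℝ) ≤ M := Nat.cast_nonneg M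
        rw [Real.norm_eq_abs, abs_of_nonneg (le_max_right _ _)]
        exact max_le (by linarith [le_abs_self (α x)]) (abs_nonneg _)
      · refine Eventually.of_forall fun x => ?_
        refine tendsto_const_nhds.congr' ?_
        obtain ⟨N, hN⟩ := exists_nat_ge (α x)
        filter_upwards [eventually_ge_atTop N] with M hM
        have : (N : ℝ) ≤ M := by exact_mod_cast hM
        exact (max_eq_right (by linarith)).symm
    rw [integral_zero] at h1
    exact (h1.eventually_lt_const (half_pos hη)).exists
  have hM0 : (0 : ℝ) ≤ M := Nat.cast_nonneg M
  set δ : ℝ := η / 2 / (2 * M * (1 + n * C) + 1) with hδ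
  have hden : (0 : ℝ) < 2 * M * (1 + n * C) + 1 := by positivity
  have hδ0 : 0 < δ := by positivity
  obtain ⟨X, hXc, hXΩ, hXδ, Y, hYc, hYs, hYδ, hcont⟩ := hψ δ hδ0
  set S : Set ((Fin d → ℝ) × (Fin n → Fin d → ℝ)) := X ×ˢ Set.univ.pi fun _ => Y with hS
  have hSc : IsCompact S := hXc.prod (isCompact_univ_pi fun _ => hYc)
  have hSm : MeasurableSet S := hSc.measurableSet
  have : CompactSpace S := isCompact_iff_compactSpace.1 hSc
  have hS1 : ∀ p ∈ S, p.1 ∈ Ω := fun p hp => hXΩ hp.1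
  have hS2 : ∀ p ∈ S, p.2 ∈ unitCellPow d n := fun p hp k _ => hYs (hp.2 k trivial)
  have hinj := auxP_inj R hR0 S (fun p hp => hR _ (hS1 p hp)) hS2
  have hemb : IsClosedEmbedding (fun p : S => auxP R p.1) :=
    ((auxP_continuous R).comp continuous_subtype_val).isClosedEmbedding
      (fun p q h => Subtype.ext (hinj p.2 q.2 h))
  let τ : ℝ → ℝ := fun t => max (-(M : ℝ)) (min M t)
  have hτc : Continuous τ := by fun_prop
  have hτM : ∀ t, |τ t| ≤ M := fun t => abs_le.2
    ⟨le_max_left _ _, max_le (by linarith) (min_le_left _ _)⟩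
  have hτd : ∀ t a, |t| ≤ a → |t - τ t| ≤ max (a - M) 0 := by
    intro t a hta
    have := abs_le.1 hta
    simp only [τ]
    rcases le_total (M : ℝ) t with h | h
    · rw [min_eq_left h, max_eq_right (by linarith), abs_of_nonneg (by linarith)]
      exact le_max_of_le_left (by linarith)
    · rw [min_eq_right h]
      rcases le_total (-(M : ℝ)) t with h' | h'
      · rw [max_eq_right h']; simp
      · rw [max_eq_left h', abs_of_nonpos (by linarith)]
        exact le_max_of_le_left (by linarith)
  let f : BoundedContinuousFunction S ℝ := BoundedContinuousFunction.mkOfCompact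
    ⟨fun p => τ (ψ p.1.1 p.1.2), hτc.comp hcont.domRestrict⟩
  have hfM : ‖f‖ ≤ M := (BoundedContinuousFunction.norm_le hM0).2 fun p => hτM _
  obtain ⟨g, hg1, hg2⟩ := BoundedContinuousFunction.exists_extension_norm_eq_of_isClosedEmbedding
    f hemb
  refine ⟨g.toContinuousMap, fun ν hfin hν => ?_⟩
  have hgM : ∀ z, |g z| ≤ M := fun z => (g.norm_coe_le_norm z).trans (hg1.le.trans hfM)
  have hgS : ∀ p ∈ S, g (auxP R p) = τ (ψ p.1 p.2) := fun p hp => congrFun hg2 ⟨p, hp⟩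
  have hgint : Integrable (fun p => g (auxP R p)) ν :=
    Integrable.of_bound (C := (M : ℝ))
      (g.continuous.comp (auxP_continuous R)).aestronglyMeasurable
      (Eventually.of_forall fun p => hgM _)
  change |(∫ p, ψ p.1 p.2 ∂ν) - ∫ p, g (auxP R p) ∂ν| ≤ η
  rw [← integral_sub (hν.integrable hΩm hC ψ hψ α hαint hdom) hgint, ← Real.norm_eq_abs]
  have hint1 : Integrable (fun x => max (α x - M) 0) (ν.map Prod.fst) := by
    rw [hν.fst]
    have hfΩ : IsFiniteMeasure (volume.restrict Ω) := by rw [← hν.fst]; infer_instance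
    exact (Integrable.sub hαint (integrable_const _)).sup (integrable_const _)
  have hint2 : Integrable (fun p => max (α p.1 - M) 0) ν := hint1.comp_measurable measurable_fst
  have hint3 : Integrable (Sᶜ.indicator fun _ => 2 * (M : ℝ)) ν :=
    (integrable_const _).indicator hSm.compl
  refine (norm_integral_le_of_norm_le (hint2.add hint3) ?_).trans ?_
  · filter_upwards [hν.fst_ae hΩm, hν.snd] with p hp1 hp2
    have h1 := hτd _ _ (hdom _ hp1 _ hp2)
    rw [Real.norm_eq_abs]
    by_cases hp : p ∈ S
    · rw [hgS p hp]
      simpa [hp] using h1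
    · simp only [Pi.add_apply]
      rw [Set.indicator_of_mem (Set.mem_compl hp)]
      have h2 := abs_le.1 (hτM (ψ p.1 p.2))
      have h3 := abs_le.1 (hgM (auxP R p))
      have h4 := abs_le.1 h1
      exact abs_le.2 ⟨by linarith, by linarith⟩
  · have e1 : ∫ p, max (α p.1 - M) 0 ∂ν = ∫ x in Ω, max (α x - M) 0 := by
      rw [← hν.fst, integral_map measurable_fst.aemeasurable hint1.aestronglyMeasurable]
    have e2 : ν.real Sᶜ ≤ (1 + n * C) * δ :=
      ENNReal.toReal_le_of_le_ofReal (by positivity)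
        (hν.compl hΩm hC X Y hXc hYc δ hδ0.le hXδ hYδ)
    simp only [Pi.add_apply]
    rw [integral_add hint2 hint3, e1, integral_indicator hSm.compl, setIntegral_const, smul_eq_mul]
    have e3 : ν.real Sᶜ * (2 * M) ≤ η / 2 := by
      calc ν.real Sᶜ * (2 * M) ≤ (1 + n * C) * δ * (2 * M) := by gcongr
        _ ≤ (2 * M * (1 + n * C) + 1) * δ := by nlinarith
        _ = η / 2 := by rw [hδ]; field_simp
    linarith

lemma auxGood_map (hΩm : MeasurableSet Ω) (R B : ℝ) (hR0 : 0 < R)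
    (hR : ∀ x ∈ Ω, ∀ i, |x i| < R / 2) (ρ : Fin n → ℝ → ℝ) (ε : ℕ → ℝ)
    (hpos : ∀ k h, 0 < ρ k (ε h)) (hB : ∀ k h, ρ k (ε h) ≤ B) (hCB : (R + 2 * B) ^ d ≤ C) (h : ℕ) :
    AuxGood (n := n) Ω C ((volume.restrict Ω).map fun x => (x, vFn ρ ε h x)) := by
  have hm : Measurable fun x : Fin d → ℝ => (x, vFn ρ ε h x) :=
    measurable_id.prodMk (vFn_measurable ρ ε h)
  refine ⟨?_, ?_, ?_⟩
  · rw [Measure.map_map measurable_fst hm]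
    exact Measure.map_id
  · rw [ae_map_iff hm.aemeasurable (measurable_snd (unitCellPow_measurable d n))]
    exact Eventually.of_forall fun x => vFn_mem ρ ε h x
  · intro k A hA
    have hmA : MeasurableSet {p : (Fin d → ℝ) × (Fin n → Fin d → ℝ) | p.2 k ∈ A} :=
      ((measurable_pi_apply k).comp measurable_snd) hA
    rw [Measure.map_apply hm hmA, Measure.restrict_apply (hm hmA)]
    refine (aux_cell Ω R B (ρ k (ε h)) (hpos k h) (hB k h) hR hR0 A).trans ?_
    gcongr

lemma auxGood_prod (hΩm : MeasurableSet Ω) (hΩ : volume Ω ≤ ENNReal.ofReal C) :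
    AuxGood (n := n) Ω C ((volume.restrict Ω).prod (volume.restrict (unitCellPow d n))) := by
  have hprob : IsProbabilityMeasure
      ((volume : Measure (Fin n → Fin d → ℝ)).restrict (unitCellPow d n)) :=
    ⟨by simp [unitCellPow_volume]⟩
  refine ⟨?_, ?_, ?_⟩
  · exact (Measure.fst_prod (μ := volume.restrict Ω))
  · exact Measure.quasiMeasurePreserving_snd.ae (ae_restrict_mem (unitCellPow_measurable d n))
  · intro k A hA
    have h1 : {p : (Fin d → ℝ) × (Fin n → Fin d → ℝ) | p.2 k ∈ A} =
        Set.univ ×ˢ {y | y k ∈ A} := by ext p; simp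
    rw [h1, Measure.prod_prod, Measure.restrict_apply_univ]
    gcongr
    have hprob1 : IsProbabilityMeasure ((volume : Measure (Fin d → ℝ)).restrict (unitCell d)) :=
      ⟨by simp [unitCell_volume]⟩
    have h2 : (volume : Measure (Fin n → Fin d → ℝ)).restrict (unitCellPow d n) =
        Measure.pi fun _ => (volume : Measure (Fin d → ℝ)).restrict (unitCell d) :=
      Measure.restrict_pi_pi _ _
    rw [h2]
    have h3 := (measurePreserving_eval
      (fun _ : Fin n => (volume : Measure (Fin d → ℝ)).restrict (unitCell d)) k).measure_preimage
      hA.nullMeasurableSet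
    exact h3.le.trans (Measure.restrict_apply_le _ _)

end Helpers


/-- For an admissible function `ψ` dominated by a positive `α ∈ L¹(Ω)`,
`∫_Ω ψ(x, v_h(x)) dx → ∫_{Ω×□^n} ψ(x,y) dx dy`. -/
theorem statement4
    (d n : ℕ) (hd : 0 < d) (hn : 0 < n)
    (Ω : Set (Fin d → ℝ)) (hΩo : IsOpen Ω) (hΩb : Bornology.IsBounded Ω)
    (ρ : Fin n → ℝ → ℝ) (hρpos : ∀ k e, 0 < e → 0 < ρ k e)
    (hρ0 : ∀ k, Tendsto (ρ k) (𝓝[>] 0) (𝓝 0))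
    (hsep : ∀ (k : ℕ) (hk : k + 1 < n),
      Tendsto (fun e => ρ ⟨k + 1, hk⟩ e / ρ ⟨k, Nat.lt_of_succ_lt hk⟩ e) (𝓝[>] 0) (𝓝 0))
    (ε : ℕ → ℝ) (hεpos : ∀ h, 0 < ε h) (hε0 : Tendsto ε atTop (𝓝 0))
    (ψ : (Fin d → ℝ) → (Fin n → Fin d → ℝ) → ℝ) (hψ : AdmissibleFun Ω ψ)
    (α : (Fin d → ℝ) → ℝ) (hαint : IntegrableOn α Ω) (hαpos : ∀ x ∈ Ω, 0 < α x)
    (hdom : ∀ x ∈ Ω, ∀ y ∈ unitCellPow d n, |ψ x y| ≤ α x) :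
    Tendsto (fun h => ∫ x in Ω, ψ x (vFn ρ ε h x)) atTop
      (𝓝 (∫ x in Ω, ∫ y in unitCellPow d n, ψ x y)) := by
  have hΩm := hΩo.measurableSet
  obtain ⟨R, hR0, hR⟩ : ∃ R : ℝ, 0 < R ∧ ∀ x ∈ Ω, ∀ i, |x i| < R / 2 := by
    obtain ⟨r, hr⟩ := hΩb.exists_norm_le
    refine ⟨2 * (|r| + 1), by positivity, fun x hx i => ?_⟩
    have h1 : |x i| ≤ ‖x‖ := norm_le_pi_norm x i
    have := hr x hx
    have := le_abs_self r
    linarith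
  have hΩfin : volume Ω ≠ ⊤ := hΩb.measure_lt_top.ne
  have hεt : Tendsto ε atTop (𝓝[>] 0) :=
    tendsto_nhdsWithin_iff.2 ⟨hε0, Eventually.of_forall hεpos⟩
  have hpos : ∀ k h, 0 < ρ k (ε h) := fun k h => hρpos k _ (hεpos h)
  have h0 : ∀ k, Tendsto (fun h => ρ k (ε h)) atTop (𝓝 0) := fun k => (hρ0 k).comp hεt
  obtain ⟨B, hB0, hB⟩ : ∃ B : ℝ, 0 ≤ B ∧ ∀ k h, ρ k (ε h) ≤ B := by
    choose b hb using fun k => (h0 k).bddAbove_range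
    refine ⟨∑ k, |b k|, by positivity, fun k h => ?_⟩
    have h1 : ρ k (ε h) ≤ b k := hb k ⟨h, rfl⟩
    have h2 := Finset.single_le_sum (f := fun k => |b k|) (fun k _ => abs_nonneg (b k))
      (Finset.mem_univ k)
    exact h1.trans ((le_abs_self _).trans h2)
  set C : ℝ := (R + 2 * B) ^ d + volume.real Ω with hCdef
  have hC1 : (R + 2 * B) ^ d ≤ C := by simp [hCdef]
  have hC2 : volume.real Ω ≤ C := by
    have : 0 ≤ (R + 2 * B) ^ d := by positivity
    linarith
  have hC : 0 ≤ C := measureReal_nonneg.trans hC2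
  have hΩC : volume Ω ≤ ENNReal.ofReal C := by
    rw [← ENNReal.ofReal_toReal hΩfin]; exact ENNReal.ofReal_le_ofReal hC2
  have hfin : IsFiniteMeasure (volume.restrict Ω) := ⟨by simpa using hΩfin.lt_top⟩
  have hfin2 : IsProbabilityMeasure
      ((volume : Measure (Fin n → Fin d → ℝ)).restrict (unitCellPow d n)) :=
    ⟨by simp [unitCellPow_volume]⟩
  have hm : ∀ h, Measurable fun x : Fin d → ℝ => (x, vFn ρ ε h x) := fun h =>
    measurable_id.prodMk (vFn_measurable ρ ε h)
  set ν : ℕ → Measure ((Fin d → ℝ) × (Fin n → Fin d → ℝ)) :=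
    fun h => (volume.restrict Ω).map fun x => (x, vFn ρ ε h x) with hν
  set μ : Measure ((Fin d → ℝ) × (Fin n → Fin d → ℝ)) :=
    (volume.restrict Ω).prod (volume.restrict (unitCellPow d n)) with hμ
  have hgν : ∀ h, AuxGood Ω C (ν h) := auxGood_map hΩm R B hR0 hR ρ ε hpos hB hC1
  have hgμ : AuxGood Ω C μ := auxGood_prod hΩm hΩC
  have hνfin : ∀ h, IsFiniteMeasure (ν h) := fun h => by simp only [hν]; infer_instance
  have e1 : ∀ h, ∫ x in Ω, ψ x (vFn ρ ε h x) = ∫ p, ψ p.1 p.2 ∂(ν h) := by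
    intro h
    rw [hν, integral_map (hm h).aemeasurable ((hgν h).aesm hΩm hC ψ hψ)]
  have e2 : ∫ x in Ω, ∫ y in unitCellPow d n, ψ x y = ∫ p, ψ p.1 p.2 ∂μ :=
    (integral_prod _ (hgμ.integrable hΩm hC ψ hψ α hαint hdom)).symm
  simp only [e1, e2]
  have hweak := aux_weak (auxP R) (auxP_continuous R) ν μ C
    (fun h => by
      simp only [hν]
      rw [map_measureReal_apply (hm h) MeasurableSet.univ]
      simpa using hC2)
    (by
      have : μ.real Set.univ = volume.real Ω := by
        rw [measureReal_def, hμ, ← Set.univ_prod_univ, Measure.prod_prod]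
        simp [measureReal_def]
      rw [this]; exact hC2)
    (fun q => aux_fourier_conv Ω hΩm hΩfin ρ ε hpos h0
      (fun k hk => (hsep k hk).comp hεt) R q)
  rw [Metric.tendsto_atTop]
  intro e he
  obtain ⟨G, hG⟩ := aux_approx (n := n) hΩm hC R hR0 hR ψ hψ α hαint hdom (e / 4) (by positivity)
  have hGt : Tendsto (fun h => ∫ p, G (auxP R p) ∂(ν h)) atTop (𝓝 (∫ p, G (auxP R p) ∂μ)) := by
    have h1 := hweak ⟨fun z => (G z : ℂ), Complex.continuous_ofReal.comp G.continuous⟩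
    simp only [ContinuousMap.coe_mk, integral_complex_ofReal] at h1
    exact Complex.continuous_re.continuousAt.tendsto.comp h1
  obtain ⟨N, hN⟩ := Metric.tendsto_atTop.1 hGt (e / 4) (by positivity)
  refine ⟨N, fun h hh => ?_⟩
  have h1 := abs_le.1 (hG (ν h) (hνfin h) (hgν h))
  have h2 := abs_le.1 (hG μ inferInstance hgμ)
  have h3 := hN h hh
  rw [Real.dist_eq, abs_lt] at h3 ⊢
  constructor <;> linarith
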